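/- The CSTN Γ_Φ is dynamically controllable if and only if the quantified Boolean formula Φ = ∃x₁∀y₁⋯∃xₙ∀yₙ φ is true, i.e., if and only if there exist v₁ ∈ {0,1} such that for all u₁ ∈ {0,1} there exists v₂ ∈ {0,1} such that … for all uₙ ∈ {0,1}, the 3CNF φ evaluates to true under the assignment x_i ↦ v_i, y_i ↦ u_i. -/

import Mathlib

/-!
The play of `Γ_Φ` is a game between the strategy and the scenario. Writing indices from `0`,
the `k`-th gadget enforces the following. Suppose `B_k ≤ A_k + k`. If neither `C_k⁰` nor `C_k¹`
were executed before `B_k + 1`, the strategy would have to place `D_k` without distinguishing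
`c_k⁰ ∧ c_k¹` (which forces `D_k ≤ B_k + 1`) from `¬c_k⁰ ∧ ¬c_k¹` (which forces
`D_k ≥ A_k + n + 2`). So some `C_k^b` is executed early, before `x_k` and `y_k` are observed:
this is the existential choice `x_k = b`. When the scenario does set `x_k = b`, the deadline on
`B_{k+1}` gives `B_{k+1} ≤ A_{k+1} + (k+1)`. At the end `B_n ≤ A_n + n` forbids every label `ℓ_j`,
so `φ` holds. This is `qbfAux_of_early`; it rests on `CSTN.Dynamic.eq_of_agree`, by which two
scenarios agreeing on everything observed before `t` have the same schedule up to time `t`.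

Conversely, winning moves for `Φ` (`move`) give an explicit strategy `strat`. The tasks `A`, `X`,
`Y` have fixed times. As long as the scenario follows the moves, `C_k^b` for the chosen `b` is
executed together with `A_k` and `B_k`, and `D_k` reacts to `c_k^b`. The other `C_k` and, after
the first deviation, all remaining `B`s and `C`s are postponed to the time `big n`, when the
constraints on them are harmless. If no deviation ever occurs, `φ` holds (`qbfAux_mask`) and no label `ℓ_j` is satisfied.
-/

open Classical

/-- A label over propositional variables `P`: a conjunction of positive or negative
literals over distinct variables, encoded as a partial assignment (`none` means the
variable does not occur in the label). The empty label is `fun _ => none`. -/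
abbrev CLabel (P : Type) := P → Option Bool

/-- The empty label `λ`. -/
def emptyLabel (P : Type) : CLabel P := fun _ => none

/-- A scenario `s` satisfies a label `ℓ` (written `s ⊨ ℓ`). -/
def sats {P : Type} (s : P → Bool) (ℓ : CLabel P) : Prop :=
  ∀ p b, ℓ p = some b → s p = b

/-- A Conditional Simple Temporal Network over tasks `T` and propositional
variables `P`.  A labeled constraint `(X, Y, δ, ℓ)` represents `(Y - X ≤ δ, ℓ)`. -/
structure CSTN (T P : Type) where
  /-- The labeled constraints. -/
  C : Set (T × T × ℝ × CLabel P)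
  Cfin : C.Finite
  /-- The label of each task. -/
  L : T → CLabel P
  /-- The observation tasks. -/
  OT : Set T
  /-- The observation task of each propositional variable. -/
  obs : P → T
  obs_mem : ∀ p, obs p ∈ OT
  obs_inj : Function.Injective obs
  obs_surj : ∀ X ∈ OT, ∃ p, obs p = X
  /-- Restriction WD1. -/
  wd1 : ∀ c ∈ C, ∀ s : P → Bool, sats s c.2.2.2 → sats s (L c.1) ∧ sats s (L c.2.1)

namespace CSTN

variable {T P : Type} (Γ : CSTN T P)

/-- The tasks `𝒯_s` executed in scenario `s` (the tasks of the projection `Γ_s`).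
An execution strategy is encoded as a total function `σ : (P → Bool) → T → ℝ`;
the values `σ s X` for `X ∉ 𝒯_s` are irrelevant. -/
def Tasks (s : P → Bool) : Set T := {X | sats s (Γ.L X)}

/-- The history `Hist(t, s, σ)`: the partial scenario recording the values in `s` of
the propositional variables observed strictly before time `t`. -/
noncomputable def Hist (σ : (P → Bool) → T → ℝ) (t : ℝ) (s : P → Bool) : P → Option Bool :=
  fun p => if Γ.obs p ∈ Γ.Tasks s ∧ σ s (Γ.obs p) < t then some (s p) else none

/-- The execution strategy `σ` is dynamic. -/
def Dynamic (σ : (P → Bool) → T → ℝ) : Prop :=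
  ∀ s s' : P → Bool, ∀ X ∈ Γ.Tasks s,
    Γ.Hist σ (σ s X) s = Γ.Hist σ (σ s X) s' → X ∈ Γ.Tasks s' ∧ σ s' X = σ s X

/-- The execution strategy `σ` is viable: in every scenario `s`, the schedule `σ s`
satisfies all constraints of the projection `Γ_s`. -/
def Viable (σ : (P → Bool) → T → ℝ) : Prop :=
  ∀ s : P → Bool, ∀ c ∈ Γ.C, sats s c.2.2.2 → σ s c.2.1 - σ s c.1 ≤ c.2.2.1

/-- `Γ` is dynamically controllable: it admits a dynamic and viable execution strategy. -/
def DynamicallyControllable : Prop :=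
  ∃ σ : (P → Bool) → T → ℝ, Γ.Dynamic σ ∧ Γ.Viable σ

end CSTN

/-! ### The reduction from Q3SAT: the CSTN `Γ_Φ` -/

/-- A literal of the Q3SAT formula: a variable `x i` (`Sum.inl i`) or `y i`
(`Sum.inr i`) together with its sign (`true` = positive occurrence). -/
abbrev QLit (n : ℕ) := (Fin n ⊕ Fin n) × Bool

/-- A clause `l₁ ∨ l₂ ∨ l₃` of the 3CNF `φ`. -/
abbrev QClause (n : ℕ) := QLit n × QLit n × QLit n

/-- The propositional variables `x i`, `y i`, `c i ⁰`, `c i ¹` of `Γ_Φ` (0-based). -/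
inductive PhiVar (n : ℕ) where
  | x (i : Fin n) | y (i : Fin n) | c0 (i : Fin n) | c1 (i : Fin n)
deriving DecidableEq

/-- The tasks of `Γ_Φ` (0-based: paper's `A_i`, `i = 1, …, n+1`, is `A ⟨i-1⟩`). -/
inductive PhiTask (n : ℕ) where
  | A (i : Fin (n + 1)) | B (i : Fin (n + 1))
  | C0 (i : Fin n) | C1 (i : Fin n) | D (i : Fin n)
  | X (i : Fin n) | Y (i : Fin n)
deriving DecidableEq

/-- The propositional variable on which a literal occurs. -/
def litVar {n : ℕ} (l : QLit n) : PhiVar n :=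
  match l.1 with
  | .inl i => .x i
  | .inr i => .y i

/-- The literals of a clause occur on pairwise distinct variables
(so that `ℓ_j = ¬l₁ ∧ ¬l₂ ∧ ¬l₃` is a well-formed label). -/
def GoodClause {n : ℕ} (c : QClause n) : Prop :=
  litVar c.1 ≠ litVar c.2.1 ∧ litVar c.1 ≠ litVar c.2.2 ∧ litVar c.2.1 ≠ litVar c.2.2

/-- A literal evaluates to true under an assignment. -/
def evalLit {n : ℕ} (s : PhiVar n → Bool) (l : QLit n) : Prop := s (litVar l) = l.2

/-- A clause evaluates to true under an assignment. -/
def evalClause {n : ℕ} (s : PhiVar n → Bool) (c : QClause n) : Prop :=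
  evalLit s c.1 ∨ evalLit s c.2.1 ∨ evalLit s c.2.2

/-- The 3CNF `φ` evaluates to true under an assignment. -/
def evalCNF {n m : ℕ} (cl : Fin m → QClause n) (s : PhiVar n → Bool) : Prop :=
  ∀ j, evalClause s (cl j)

/-- The label consisting of the single literal forcing `p` to `b`. -/
def singleLabel {n : ℕ} (p : PhiVar n) (b : Bool) : CLabel (PhiVar n) :=
  fun q => if q = p then some b else none

/-- The label conjunction of two literals. -/
def pairLabel {n : ℕ} (p : PhiVar n) (bp : Bool) (q : PhiVar n) (bq : Bool) :
    CLabel (PhiVar n) :=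
  fun r => if r = p then some bp else if r = q then some bq else none

/-- The label `ℓ_j := ¬l_{j,1} ∧ ¬l_{j,2} ∧ ¬l_{j,3}`, the negation of the clause. -/
def clauseLabel {n : ℕ} (c : QClause n) : CLabel (PhiVar n) :=
  fun q =>
    if q = litVar c.1 then some (!c.1.2)
    else if q = litVar c.2.1 then some (!c.2.1.2)
    else if q = litVar c.2.2 then some (!c.2.2.2)
    else none

/-- `𝒪(x i) = X i`, `𝒪(y i) = Y i`, `𝒪(c i ⁰) = C i ⁰`, `𝒪(c i ¹) = C i ¹`. -/
def phiObs (n : ℕ) : PhiVar n → PhiTask n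
  | .x i => .X i
  | .y i => .Y i
  | .c0 i => .C0 i
  | .c1 i => .C1 i

abbrev PhiCon (n : ℕ) := PhiTask n × PhiTask n × ℝ × CLabel (PhiVar n)

/-- The seven constraints of the `i`-th gadget (as `(X, Y, δ, ℓ)` meaning `Y - X ≤ δ`):
`(D_i ≤ B_i + 1, c_i⁰ ∧ c_i¹)`, `(D_i ≥ A_i + (n+2), ¬c_i⁰ ∧ ¬c_i¹)`,
`(X_i ≥ A_i + (n+2), λ)`, `(Y_i ≥ X_i + 1, λ)`, `(A_{i+1} ≥ Y_i + 1, λ)`,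
`(B_{i+1} ≤ C_i⁰ + (n+4), ¬x_i)`, `(B_{i+1} ≤ C_i¹ + (n+4), x_i)`. -/
def gadget (n : ℕ) (i : Fin n) : Set (PhiCon n) :=
  {(.B i.castSucc, .D i, 1, pairLabel (.c0 i) true (.c1 i) true),
   (.D i, .A i.castSucc, -((n : ℝ) + 2), pairLabel (.c0 i) false (.c1 i) false),
   (.X i, .A i.castSucc, -((n : ℝ) + 2), emptyLabel _),
   (.Y i, .X i, -1, emptyLabel _),
   (.A i.succ, .Y i, -1, emptyLabel _),
   (.C0 i, .B i.succ, (n : ℝ) + 4, singleLabel (.x i) false),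
   (.C1 i, .B i.succ, (n : ℝ) + 4, singleLabel (.x i) true)}

/-- The constraints of `Γ_Φ`: `(B₁ - A₁ ≤ 0, λ)`, the gadget constraints, and the
clause constraints `(B_{n+1} - A_{n+1} ≥ n+1, ℓ_j)` for `j = 1, …, m`. -/
def PhiC (n m : ℕ) (cl : Fin m → QClause n) : Set (PhiCon n) :=
  insert (.A 0, .B 0, (0 : ℝ), emptyLabel _)
    ((⋃ i : Fin n, gadget n i) ∪
     (⋃ j : Fin m,
       {(.B (Fin.last n), .A (Fin.last n), -((n : ℝ) + 1), clauseLabel (cl j))}))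

/-- The CSTN `Γ_Φ` associated to the Q3SAT formula
`Φ = ∃x₁∀y₁ ⋯ ∃xₙ∀yₙ ⋀_{j=1}^m (l_{j,1} ∨ l_{j,2} ∨ l_{j,3})`. -/
def GammaPhi (n m : ℕ) (cl : Fin m → QClause n) : CSTN (PhiTask n) (PhiVar n) where
  C := PhiC n m cl
  Cfin := by
    apply Set.Finite.insert
    apply Set.Finite.union
    · exact Set.finite_iUnion fun i =>
        (((((((Set.finite_singleton _).insert _).insert _).insert _).insert
          _).insert _).insert _)
    · exact Set.finite_iUnion fun j => Set.finite_singleton _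
  L := fun _ => emptyLabel _
  OT := Set.range (phiObs n)
  obs := phiObs n
  obs_mem := fun p => ⟨p, rfl⟩
  obs_inj := by
    intro p q hpq
    cases p <;> cases q <;> simp_all [phiObs]
  obs_surj := fun _ hX => hX
  wd1 := by
    intro c _ s _
    constructor <;> · intro p b hb; simp [emptyLabel] at hb

/-- Truth of the alternating suffix `∃x_{k+1} ∀y_{k+1} ⋯ ∃x_n ∀y_n φ` of `Φ`, for
the assignment `s` of the already-quantified variables; `fuel` bounds the number
of remaining quantifier blocks. -/
def QBFAux {n m : ℕ} (cl : Fin m → QClause n) : ℕ → ℕ → (PhiVar n → Bool) → Prop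
  | 0, _, s => evalCNF cl s
  | fuel + 1, k, s =>
    if h : k < n then
      ∃ v : Bool, ∀ u : Bool,
        QBFAux cl fuel (k + 1)
          (Function.update (Function.update s (PhiVar.x ⟨k, h⟩) v) (PhiVar.y ⟨k, h⟩) u)
    else evalCNF cl s

/-- The quantified Boolean formula `Φ = ∃x₁ ∀y₁ ⋯ ∃xₙ ∀yₙ φ` is true:
there exists `v₁` such that for all `u₁` there exists `v₂` … for all `uₙ`,
`φ` is true under `x_i ↦ v_i`, `y_i ↦ u_i`. -/
def QBFTrue (n m : ℕ) (cl : Fin m → QClause n) : Prop :=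
  QBFAux cl n 0 (fun _ => false)

/-! ### Dynamic strategies and labels -/

/-- Two scenarios that agree on all propositions observed before time `t` under the first one
receive the same schedule up to and including time `t`. At the earliest time `≤ t` at which the
two schedules differ the histories would coincide, contradicting dynamicity. -/
theorem CSTN.Dynamic.eq_of_agree {T P : Type} [Finite T] {Γ : CSTN T P}
    (hL : ∀ X, Γ.L X = emptyLabel P) {σ : (P → Bool) → T → ℝ} (hσ : Γ.Dynamic σ)
    {s s' : P → Bool} {t : ℝ} (h : ∀ p, σ s (Γ.obs p) < t → s p = s' p)
    {Z : T} (hZ : σ s Z ≤ t ∨ σ s' Z ≤ t) : σ s' Z = σ s Z := by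
  have hT : ∀ r X, X ∈ Γ.Tasks r := by
    intro r X p b hp
    simp [hL, emptyLabel] at hp
  by_contra hne
  obtain ⟨W, hW, hmin⟩ := Set.exists_min_image {W | σ s' W ≠ σ s W}
    (fun W => min (σ s W) (σ s' W)) (Set.toFinite _) ⟨Z, hne⟩
  set u := min (σ s W) (σ s' W) with hu
  have hut : u ≤ t := by
    refine (hmin Z hne).trans ?_
    rcases hZ with hZ | hZ
    · exact (min_le_left _ _).trans hZ
    · exact (min_le_right _ _).trans hZ
  have hsame : ∀ V, (σ s V < u ∨ σ s' V < u) → σ s' V = σ s V := by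
    intro V hV
    by_contra hV'
    have := hmin V hV'
    rcases hV with hV | hV
    · exact absurd (this.trans (min_le_left _ _)) (not_le.2 hV)
    · exact absurd (this.trans (min_le_right _ _)) (not_le.2 hV)
  have hH : Γ.Hist σ u s = Γ.Hist σ u s' := by
    funext p
    by_cases hp : σ s (Γ.obs p) < u
    · have := hsame _ (Or.inl hp)
      simp [CSTN.Hist, hT, this, hp, h p (hp.trans_le hut)]
    · have hp' : ¬ σ s' (Γ.obs p) < u := fun hp' => hp (hsame _ (Or.inr hp') ▸ hp')
      simp [CSTN.Hist, hp, hp']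
  rcases min_choice (σ s W) (σ s' W) with hc | hc <;> rw [← hu] at hc <;> rw [hc] at hH
  · exact hW (hσ s s' W (hT _ _) hH).2
  · exact hW (hσ s' s W (hT _ _) hH.symm).2.symm

instance finite_phiTask (n : ℕ) : Finite (PhiTask n) := by
  let f : PhiTask n → Fin 7 × Fin (n + 1) := fun
    | .A i => (0, i) | .B i => (1, i) | .C0 i => (2, i.castSucc) | .C1 i => (3, i.castSucc)
    | .D i => (4, i.castSucc) | .X i => (5, i.castSucc) | .Y i => (6, i.castSucc)
  refine Finite.of_injective f ?_
  intro a b hab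
  cases a <;> cases b <;> simp_all [f]

theorem sats_empty {P : Type} (s : P → Bool) : sats s (emptyLabel P) := by
  intro p b h
  simp [emptyLabel] at h

theorem sats_single {n : ℕ} {s : PhiVar n → Bool} {p : PhiVar n} {b : Bool} :
    sats s (singleLabel p b) ↔ s p = b := by
  constructor
  · intro h
    exact h p b (by simp [singleLabel])
  · intro h q c hq
    simp only [singleLabel] at hq
    split_ifs at hq <;> simp_all

theorem sats_pair {n : ℕ} {s : PhiVar n → Bool} {p q : PhiVar n} {b c : Bool} (hpq : p ≠ q) :
    sats s (pairLabel p b q c) ↔ s p = b ∧ s q = c := by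
  constructor
  · intro h
    exact ⟨h p b (by simp [pairLabel]), h q c (by simp [pairLabel, hpq.symm])⟩
  · rintro ⟨h1, h2⟩ r d hr
    simp only [pairLabel] at hr
    split_ifs at hr <;> simp_all

theorem sats_clauseLabel {n : ℕ} {s : PhiVar n → Bool} {c : QClause n}
    (h : ¬ evalClause s c) : sats s (clauseLabel c) := by
  simp only [evalClause, evalLit, not_or] at h
  intro q b hq
  simp only [clauseLabel] at hq
  split_ifs at hq <;> (subst_vars; simp_all)

theorem not_evalClause {n : ℕ} {s : PhiVar n → Bool} {c : QClause n} (hc : GoodClause c)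
    (h : sats s (clauseLabel c)) : ¬ evalClause s c := by
  obtain ⟨h12, h13, h23⟩ := hc
  have h1 := h (litVar c.1) (!c.1.2) (by simp [clauseLabel])
  have h2 := h (litVar c.2.1) (!c.2.1.2) (by simp [clauseLabel, h12.symm])
  have h3 := h (litVar c.2.2) (!c.2.2.2) (by simp [clauseLabel, h13.symm, h23.symm])
  simp [evalClause, evalLit, h1, h2, h3]

/-- Viability for `Γ_Φ`, with the constraints and labels spelled out. -/
theorem viable_gammaPhi_iff {n m : ℕ} {cl : Fin m → QClause n}
    {σ : (PhiVar n → Bool) → PhiTask n → ℝ} :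
    (GammaPhi n m cl).Viable σ ↔ ∀ s,
      σ s (.B 0) - σ s (.A 0) ≤ 0 ∧
      (∀ i : Fin n,
        (s (.c0 i) = true ∧ s (.c1 i) = true → σ s (.D i) - σ s (.B i.castSucc) ≤ 1) ∧
        (s (.c0 i) = false ∧ s (.c1 i) = false →
          σ s (.A i.castSucc) - σ s (.D i) ≤ -((n : ℝ) + 2)) ∧
        σ s (.A i.castSucc) - σ s (.X i) ≤ -((n : ℝ) + 2) ∧
        σ s (.X i) - σ s (.Y i) ≤ -1 ∧
        σ s (.Y i) - σ s (.A i.succ) ≤ -1 ∧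
        (s (.x i) = false → σ s (.B i.succ) - σ s (.C0 i) ≤ (n : ℝ) + 4) ∧
        (s (.x i) = true → σ s (.B i.succ) - σ s (.C1 i) ≤ (n : ℝ) + 4)) ∧
      (∀ j, sats s (clauseLabel (cl j)) →
        σ s (.A (Fin.last n)) - σ s (.B (Fin.last n)) ≤ -((n : ℝ) + 1)) := by
  have hp : ∀ i : Fin n, PhiVar.c0 i ≠ PhiVar.c1 i := by intro i; simp
  unfold CSTN.Viable
  refine forall_congr' fun s => ?_
  constructor
  · intro h
    refine ⟨h (.A 0, .B 0, 0, emptyLabel _) (Set.mem_insert _ _) (sats_empty s),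
      fun i => ?_, fun j hj => ?_⟩
    · have hg : ∀ c ∈ gadget n i, sats s c.2.2.2 → σ s c.2.1 - σ s c.1 ≤ c.2.2.1 :=
        fun c hc => h c (Set.mem_insert_of_mem _ (Or.inl (Set.mem_iUnion.2 ⟨i, hc⟩)))
      simpa only [gadget, Set.forall_mem_insert, Set.mem_singleton_iff, forall_eq,
        sats_pair (hp i), sats_single, sats_empty, true_imp_iff] using hg
    · exact h (.B (Fin.last n), .A (Fin.last n), -((n : ℝ) + 1), clauseLabel (cl j))
        (Set.mem_insert_of_mem _ (Or.inr (Set.mem_iUnion.2 ⟨j, rfl⟩))) hj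
  · rintro ⟨h0, hg, hc⟩ c (rfl | hmem | hmem)
    · exact fun _ => h0
    · obtain ⟨i, hi⟩ := Set.mem_iUnion.1 hmem
      have : ∀ c ∈ gadget n i, sats s c.2.2.2 → σ s c.2.1 - σ s c.1 ≤ c.2.2.1 := by
        simpa only [gadget, Set.forall_mem_insert, Set.mem_singleton_iff, forall_eq,
          sats_pair (hp i), sats_single, sats_empty, true_imp_iff] using hg i
      exact this c hi
    · obtain ⟨j, rfl⟩ := Set.mem_iUnion.1 hmem
      exact hc j

/-! ### From a strategy to truth of the formula -/

/-- Under a dynamic and viable strategy, if `B_k` comes early (`B_k ≤ A_k + k`) in a scenario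
where all `c_i⁰`, `c_i¹` are false, then the suffix of `Φ` from the `k`-th quantifier block on
is true for that scenario. -/
theorem qbfAux_of_early {n m : ℕ} {cl : Fin m → QClause n}
    {σ : (PhiVar n → Bool) → PhiTask n → ℝ} (hd : (GammaPhi n m cl).Dynamic σ)
    (hv : (GammaPhi n m cl).Viable σ) (f k : ℕ) (hk : k + f = n) (s : PhiVar n → Bool)
    (hs : ∀ i, s (.c0 i) = false ∧ s (.c1 i) = false)
    (hB : σ s (.B ⟨k, by omega⟩) ≤ σ s (.A ⟨k, by omega⟩) + k) : QBFAux cl f k s := by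
  rw [viable_gammaPhi_iff] at hv
  induction f generalizing k s with
  | zero =>
    obtain rfl : k = n := by omega
    intro j
    by_contra hj
    have := (hv s).2.2 j (sats_clauseLabel hj)
    change σ s (.B (Fin.last k)) ≤ σ s (.A (Fin.last k)) + k at hB
    linarith
  | succ f ih =>
    have hkn : k < n := by omega
    simp only [QBFAux, dif_pos hkn]
    set i : Fin n := ⟨k, hkn⟩ with hi
    change σ s (.B i.castSucc) ≤ σ s (.A i.castSucc) + k at hB
    have hkn' : (k : ℝ) + 1 ≤ n := by exact_mod_cast hkn
    obtain ⟨-, hD, hX, hY, -, -, -⟩ := (hv s).2.1 i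
    replace hD := hD (hs i)
    have hearly : ∃ b : Bool,
        σ s (if b then .C1 i else .C0 i) < σ s (.B i.castSucc) + 1 := by
      by_contra! hlate
      have h0 := hlate false
      have h1 := hlate true
      simp only [Bool.false_eq_true, if_false, if_true] at h0 h1
      -- Flipping both unobserved outcomes moves the deadline of `D_k` down to `B_k + 1`, yet the
      -- schedule up to `B_k + 1` is unchanged.
      let s' := Function.update (Function.update s (.c0 i) true) (.c1 i) true
      have hag : ∀ p, σ s ((GammaPhi n m cl).obs p) < σ s (.B i.castSucc) + 1 → s p = s' p := by
        intro p hp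
        have hp0 : p ≠ .c0 i := by
          rintro rfl
          exact absurd hp (not_lt.2 h0)
        have hp1 : p ≠ .c1 i := by
          rintro rfl
          exact absurd hp (not_lt.2 h1)
        simp [s', hp0, hp1]
      have eB := hd.eq_of_agree (fun _ => rfl) hag (Z := .B i.castSucc) (Or.inl (by linarith))
      have hD' := ((hv s').2.1 i).1 (by simp [s'])
      have eD := hd.eq_of_agree (fun _ => rfl) hag (Z := .D i) (Or.inr (by linarith))
      linarith
    obtain ⟨b, hb⟩ := hearly
    refine ⟨b, fun u => ?_⟩
    set s' := Function.update (Function.update s (PhiVar.x i) b) (PhiVar.y i) u with hs'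
    have hag : ∀ p, σ s ((GammaPhi n m cl).obs p) < σ s (.X i) → s p = s' p := by
      intro p hp
      have hp0 : p ≠ .x i := by
        rintro rfl
        exact absurd hp (lt_irrefl _)
      have hp1 : p ≠ .y i := by
        rintro rfl
        change σ s (.Y i) < σ s (.X i) at hp
        linarith
      simp [s', hp0, hp1]
    refine ih (k + 1) (by omega) s' (fun j => by simpa [s'] using hs j) ?_
    change σ s' (.B i.succ) ≤ σ s' (.A i.succ) + ((k + 1 : ℕ) : ℝ)
    have eA := hd.eq_of_agree (fun _ => rfl) hag (Z := .A i.castSucc) (Or.inl (by linarith))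
    have eC := hd.eq_of_agree (fun _ => rfl) hag (Z := if b then .C1 i else .C0 i)
      (Or.inl (by linarith))
    obtain ⟨-, -, hX', hY', hA', hC0, hC1⟩ := (hv s').2.1 i
    have hx : s' (.x i) = b := by simp [s']
    have hC : σ s' (.B i.succ) - σ s' (if b then .C1 i else .C0 i) ≤ (n : ℝ) + 4 := by
      cases b
      · exact hC0 hx
      · exact hC1 hx
    push_cast
    linarith

/-! ### From truth of the formula to a strategy -/

/-- The part of `s` concerning the first `k` quantifier blocks; everything else is `false`. -/
def mask {n : ℕ} (k : ℕ) (s : PhiVar n → Bool) : PhiVar n → Bool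
  | .x i => if (i : ℕ) < k then s (.x i) else false
  | .y i => if (i : ℕ) < k then s (.y i) else false
  | .c0 _ => false
  | .c1 _ => false

/-- The winning move for the existential variable `x i` after the play recorded by `s`
(meaningful only if one exists): `true` if that wins, and `false` otherwise. -/
noncomputable def move {n m : ℕ} (cl : Fin m → QClause n) (i : Fin n) (s : PhiVar n → Bool) :
    Bool :=
  decide (∀ u : Bool, QBFAux cl (n - (i + 1)) (i + 1)
    (Function.update (Function.update (mask i s) (PhiVar.x i) true) (PhiVar.y i) u))

/-- In the scenario `s` the first `k` existential variables follow the winning moves. -/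
def Follows {n m : ℕ} (cl : Fin m → QClause n) (k : ℕ) (s : PhiVar n → Bool) : Prop :=
  ∀ i : Fin n, (i : ℕ) < k → s (.x i) = move cl i s

/-- The fixed execution time of `A_k` (with `0`-based index). -/
def base (n k : ℕ) : ℝ := k * ((n : ℝ) + 4)

/-- The time to which tasks are postponed once the scenario has left the winning play. -/
def big (n : ℕ) : ℝ := base n (n + 1)

/-- The execution strategy of `Γ_Φ` derived from the winning moves. -/
noncomputable def strat {n m : ℕ} (cl : Fin m → QClause n) (s : PhiVar n → Bool) :
    PhiTask n → ℝ
  | .A i => base n i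
  | .B i => if Follows cl i s then base n i else big n
  | .C0 i => if Follows cl i s ∧ move cl i s = false then base n i else big n
  | .C1 i => if Follows cl i s ∧ move cl i s = true then base n i else big n
  | .D i => if Follows cl i s ∧ s (if move cl i s then .c1 i else .c0 i) = true then
      base n i + 1 else base n i + n + 2
  | .X i => base n i + n + 2
  | .Y i => base n i + n + 3

theorem base_succ (n k : ℕ) : base n (k + 1) = base n k + n + 4 := by
  simp only [base]
  push_cast
  ring

theorem base_mono (n : ℕ) : Monotone (base n) := by
  intro a b h
  have : (a : ℝ) ≤ b := by exact_mod_cast h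
  exact mul_le_mul_of_nonneg_right this (by positivity)

theorem base_add_le {n k l : ℕ} (h : k < l) : base n k + n + 4 ≤ base n l := by
  rw [← base_succ]
  exact base_mono n h

theorem mask_succ {n : ℕ} (i : Fin n) (s : PhiVar n → Bool) :
    mask (i + 1) s = Function.update (Function.update (mask i s) (PhiVar.x i) (s (.x i)))
      (PhiVar.y i) (s (.y i)) := by
  funext p
  rcases p with j | j | j | j
  · by_cases hj : j = i
    · subst hj
      simp [mask]
    · have : (j : ℕ) ≠ i := fun h => hj (Fin.ext h)
      have h' : (j : ℕ) < i + 1 ↔ (j : ℕ) < i := by omega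
      simp [mask, hj, h']
  · by_cases hj : j = i
    · subst hj
      simp [mask]
    · have : (j : ℕ) ≠ i := fun h => hj (Fin.ext h)
      have h' : (j : ℕ) < i + 1 ↔ (j : ℕ) < i := by omega
      simp [mask, hj, h']
  · simp [mask]
  · simp [mask]

/-- If `Φ` is true and the scenario follows the winning moves, the remaining suffix of `Φ` stays
true. -/
theorem qbfAux_mask {n m : ℕ} {cl : Fin m → QClause n} (hq : QBFTrue n m cl)
    {s : PhiVar n → Bool} (k : ℕ) (hk : k ≤ n) (hf : Follows cl k s) :
    QBFAux cl (n - k) k (mask k s) := by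
  induction k with
  | zero =>
    have : mask 0 s = fun _ => false := by
      funext p
      cases p <;> simp [mask]
    rw [this]
    exact hq
  | succ k ih =>
    have h := ih (by omega) fun i hi => hf i (by omega)
    have hkn : k < n := hk
    rw [show n - k = (n - (k + 1)) + 1 by omega] at h
    simp only [QBFAux, dif_pos hkn] at h
    obtain ⟨v, hvu⟩ := h
    have hx : s (.x ⟨k, hkn⟩) = move cl ⟨k, hkn⟩ s := hf ⟨k, hkn⟩ (Nat.lt_succ_self k)
    have hms := mask_succ ⟨k, hkn⟩ s
    change mask (k + 1) s = Function.update (Function.update (mask k s) _ _) _ _ at hms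
    rw [hms, hx]
    cases hmv : move cl ⟨k, hkn⟩ s with
    | true => exact of_decide_eq_true hmv (s (.y ⟨k, hkn⟩))
    | false =>
      have hnot := of_decide_eq_false hmv
      cases v with
      | true => exact absurd hvu hnot
      | false => exact hvu _

theorem evalCNF_of_follows {n m : ℕ} {cl : Fin m → QClause n} (hq : QBFTrue n m cl)
    {s : PhiVar n → Bool} (hf : Follows cl n s) : evalCNF cl s := by
  have h := qbfAux_mask hq n le_rfl hf
  rw [Nat.sub_self] at h
  have he : ∀ l : QLit n, evalLit (mask n s) l ↔ evalLit s l := by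
    rintro ⟨i | i, b⟩ <;> simp [evalLit, litVar, mask]
  intro j
  have hj := h j
  simpa only [evalClause, he] using hj

theorem strat_viable {n m : ℕ} {cl : Fin m → QClause n} (hgood : ∀ j, GoodClause (cl j))
    (hq : QBFTrue n m cl) : (GammaPhi n m cl).Viable (strat cl) := by
  rw [viable_gammaPhi_iff]
  intro s
  have hn0 : (0 : ℝ) ≤ n := Nat.cast_nonneg n
  refine ⟨?_, fun i => ?_, fun j hj => ?_⟩
  · have : Follows cl 0 s := fun i hi => absurd hi (Nat.not_lt_zero _)
    simp [strat, this]
  · have hbig : base n (i + 1) ≤ big n := base_mono n (by omega)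
    have hbs := base_succ n i
    -- Following the moves at block `i` too keeps `B_{i+1}` together with `A_{i+1}`.
    have hstep : Follows cl i s → s (.x i) = move cl i s → Follows cl (i + 1) s := by
      intro hf hx j hj
      rcases Nat.lt_succ_iff_lt_or_eq.1 hj with hj | hj
      · exact hf j hj
      · obtain rfl : j = i := Fin.ext hj
        exact hx
    have hBle : strat cl s (.B i.succ) ≤ big n := by
      simp only [strat, Fin.val_succ]
      split_ifs
      · exact hbig
      · exact le_rfl
    refine ⟨?_, ?_, ?_, ?_, ?_, ?_, ?_⟩
    · rintro ⟨h0, h1⟩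
      have : s (if move cl i s then .c1 i else .c0 i) = true := by
        split_ifs <;> assumption
      simp only [strat, this, and_true, Fin.val_castSucc]
      split_ifs <;> linarith
    · rintro ⟨h0, h1⟩
      have : s (if move cl i s then .c1 i else .c0 i) = false := by
        split_ifs <;> assumption
      simp only [strat, this, Fin.val_castSucc]
      simp
      linarith
    · simp only [strat, Fin.val_castSucc]
      linarith
    · simp only [strat]
      linarith
    · simp only [strat, Fin.val_succ]
      linarith
    · intro hx
      by_cases hc : Follows cl i s ∧ move cl i s = false
      · have := hstep hc.1 (hx.trans hc.2.symm)
        simp only [strat, Fin.val_succ, if_pos hc, if_pos this]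
        linarith
      · have : strat cl s (.C0 i) = big n := by simp only [strat, if_neg hc]
        linarith
    · intro hx
      by_cases hc : Follows cl i s ∧ move cl i s = true
      · have := hstep hc.1 (hx.trans hc.2.symm)
        simp only [strat, Fin.val_succ, if_pos hc, if_pos this]
        linarith
      · have : strat cl s (.C1 i) = big n := by simp only [strat, if_neg hc]
        linarith
  · have hf : ¬ Follows cl n s := fun hf =>
      not_evalClause (hgood j) hj (evalCNF_of_follows hq hf j)
    have hbs := base_succ n n
    simp only [strat, Fin.val_last, if_neg hf, big]
    linarith

/-- The data from which `strat` decides at block `k` depend only on the first `k` blocks of the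
scenario. -/
theorem mask_eq_and_follows_iff {n m : ℕ} (cl : Fin m → QClause n) {k : ℕ}
    {s s' : PhiVar n → Bool}
    (h : ∀ i : Fin n, (i : ℕ) < k → s (.x i) = s' (.x i) ∧ s (.y i) = s' (.y i)) :
    mask k s = mask k s' ∧ (Follows cl k s ↔ Follows cl k s') := by
  have hm : ∀ l ≤ k, mask l s = mask l s' := by
    intro l hl
    funext p
    rcases p with i | i | i | i
    · by_cases hi : (i : ℕ) < l
      · simp [mask, hi, (h i (by omega)).1]
      · simp [mask, hi]
    · by_cases hi : (i : ℕ) < l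
      · simp [mask, hi, (h i (by omega)).2]
      · simp [mask, hi]
    · rfl
    · rfl
  refine ⟨hm k le_rfl, forall₂_congr fun i hi => ?_⟩
  rw [(h i hi).1, move, move, hm i hi.le]

theorem strat_dynamic {n m : ℕ} (cl : Fin m → QClause n) :
    (GammaPhi n m cl).Dynamic (strat cl) := by
  intro s s' Z _
  set t := strat cl s Z with ht
  intro hH
  have hT : ∀ r X, X ∈ (GammaPhi n m cl).Tasks r := fun r X => sats_empty r
  refine ⟨hT _ _, ?_⟩
  have hobs : ∀ p, strat cl s (phiObs n p) < t → s p = s' p := by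
    intro p hp
    have h := congrFun hH p
    have hp1 : strat cl s ((GammaPhi n m cl).obs p) < t := hp
    simp only [CSTN.Hist, hT, hp1, and_self, if_true, true_and] at h
    split_ifs at h
    simpa using h
  have hn0 : (0 : ℝ) ≤ n := Nat.cast_nonneg n
  -- By the time of `A_k` the first `k` blocks have been observed.
  have key : ∀ k, base n k ≤ t → mask k s = mask k s' ∧ (Follows cl k s ↔ Follows cl k s') := by
    intro k hk
    refine mask_eq_and_follows_iff cl fun i hi => ⟨hobs (.x i) ?_, hobs (.y i) ?_⟩
    · have := base_add_le (n := n) hi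
      simp only [phiObs, strat]
      linarith
    · have := base_add_le (n := n) hi
      simp only [phiObs, strat]
      linarith
  have hmove : ∀ i : Fin n, base n i ≤ t → move cl i s = move cl i s' := by
    intro i hi
    rw [move, move, (key i hi).1]
  have hle : ∀ k ≤ n, base n k ≤ big n := fun k hk => base_mono n (by omega)
  cases Z with
  | A i => rfl
  | X i => rfl
  | Y i => rfl
  | B i =>
    have hb : base n i ≤ t := by
      simp only [ht, strat]
      split_ifs
      · exact le_rfl
      · exact hle _ (by omega)
    simp only [ht, strat, (key i hb).2]
  | C0 i =>
    have hb : base n i ≤ t := by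
      simp only [ht, strat]
      split_ifs
      · exact le_rfl
      · exact hle _ (by omega)
    simp only [ht, strat, (key i hb).2, hmove i hb]
  | C1 i =>
    have hb : base n i ≤ t := by
      simp only [ht, strat]
      split_ifs
      · exact le_rfl
      · exact hle _ (by omega)
    simp only [ht, strat, (key i hb).2, hmove i hb]
  | D i =>
    have hb : base n i < t := by
      simp only [ht, strat]
      split_ifs <;> linarith
    have hF := (key i hb.le).2
    have hM := hmove i hb.le
    by_cases hf : Follows cl i s
    · -- The chosen `C` is executed together with `A_i`, so its outcome is known at `D_i`.
      have hc : s (if move cl i s then .c1 i else .c0 i) =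
          s' (if move cl i s then .c1 i else .c0 i) := by
        apply hobs
        cases hmv : move cl i s <;> simpa [phiObs, strat, hf, hmv] using hb
      simp only [ht, strat, ← hF, ← hM, hc]
    · have hf' : ¬ Follows cl i s' := fun h => hf (hF.2 h)
      simp [ht, strat, hf, hf']

/-- **PSPACE-hardness reduction.** `Γ_Φ` is dynamically controllable iff the
quantified Boolean formula `Φ` is true. -/
theorem gammaPhi_dc_iff_qbf (n m : ℕ) (hn : 1 ≤ n) (hm : 1 ≤ m)
    (cl : Fin m → QClause n) (hgood : ∀ j, GoodClause (cl j)) :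
    (GammaPhi n m cl).DynamicallyControllable ↔ QBFTrue n m cl := by
  constructor
  · rintro ⟨σ, hd, hv⟩
    refine qbfAux_of_early hd hv n 0 (Nat.zero_add n) _ (fun _ => ⟨rfl, rfl⟩) ?_
    have h := ((viable_gammaPhi_iff.1 hv) fun _ => false).1
    change σ _ (.B 0) ≤ σ _ (.A 0) + ((0 : ℕ) : ℝ)
    push_cast
    linarith
  · intro hq
    exact ⟨strat cl, strat_dynamic cl, strat_viable hgood hq⟩
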